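/- arXiv:2101.06758 — 2 statements merged into one kernel-verified Lean document; each statement's English description precedes it below -/
import Mathlib

section
/- (Collapse commutes with insertion.) Let γ > 1 be a real, f : ℤ → ℕ a function and x a positive real. Then UC(f + δ_{⌈log_γ x⌉}) = UC(f) + δ_{⌈log_{γ²} x⌉}, where δ_k denotes the indicator function of the integer k. Hence inserting an item and then collapsing yields the same sketch as collapsing and then inserting the item at its new (base-γ²) bucket index. -/
/-!
Passing from base `γ` to base `γ ^ 2` halves `log_γ x`, and the indices `2 * j - 1` and `2 * j` that
the collapse merges into bucket `j` are exactly the values of `⌈L⌉` over the reals `L` with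
`⌈L / 2⌉ = j`.
-/

/-- The uniform collapse operator. -/
def UC (f : ℤ → ℕ) : ℤ → ℕ := fun j => f (2 * j - 1) + f (2 * j)

/-- Indicator function of the integer k. -/
def delta (k : ℤ) : ℤ → ℕ := fun j => if j = k then 1 else 0

theorem UC_add (f g : ℤ → ℕ) : UC (f + g) = UC f + UC g :=
  funext fun _ => add_add_add_comm _ _ _ _

theorem logb_pow_base (b x : ℝ) (k : ℕ) : Real.logb (b ^ k) x = Real.logb b x / k := by
  rw [Real.logb, Real.logb, Real.log_pow, mul_comm, div_div]

section FloorRing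

variable {K : Type*} [Field K] [LinearOrder K] [IsStrictOrderedRing K] [FloorRing K]

theorem ceil_div_natCast_eq_iff (a : K) {n : ℕ} (hn : 0 < n) (j : ℤ) :
    ⌈a / n⌉ = j ↔ n * (j - 1) < ⌈a⌉ ∧ ⌈a⌉ ≤ n * j := by
  have hn' : (0 : K) < n := Nat.cast_pos.mpr hn
  rw [Int.ceil_eq_iff, lt_div_iff₀' hn', div_le_iff₀' hn', Int.lt_ceil, Int.ceil_le]
  push_cast
  rfl

theorem ceil_div_two_eq_iff (a : K) (j : ℤ) :
    ⌈a / 2⌉ = j ↔ ⌈a⌉ = 2 * j - 1 ∨ ⌈a⌉ = 2 * j := by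
  have h := ceil_div_natCast_eq_iff a two_pos j
  push_cast at h
  rw [h]
  omega

theorem UC_delta_ceil (a : K) : UC (delta ⌈a⌉) = delta ⌈a / 2⌉ := by
  funext j
  have hj := ceil_div_two_eq_iff a j
  simp only [UC, delta]
  split_ifs <;> omega

theorem collapse_commutes_with_insert_general (f : ℤ → ℕ) (a : K) :
    UC (f + delta ⌈a⌉) = UC f + delta ⌈a / 2⌉ := by
  rw [UC_add, UC_delta_ceil]

end FloorRing

/-- Collapse commutes with insertion: inserting and then
collapsing equals collapsing and then inserting at the base-γ² index. -/
theorem collapse_commutes_with_insert (γ : ℝ) (hγ : 1 < γ) (f : ℤ → ℕ) (x : ℝ)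
    (hx : 0 < x) :
    UC (f + delta ⌈Real.logb γ x⌉) = UC f + delta ⌈Real.logb (γ ^ 2) x⌉ := by
  rw [logb_pow_base, Nat.cast_ofNat]
  exact collapse_commutes_with_insert_general f (Real.logb γ x)
end

section
/- (Distribution-independent accuracy of the final sketch.) Let γ₀ > 1 be a real, m ≥ 2 a natural number, x_min and x_max reals with 0 < x_min ≤ x_max, and t ≥ 1 a natural number such that the set of bucket indices of a multiset D of reals in [x_min, x_max] at base γ₀^(2^(t−1)) has cardinality strictly greater than m. Set γ = γ₀^(2^t) and ρ = (x_max/x_min)^(2/(m−1)). Then for every element x of D lying in the bucket with index i at base γ (i.e., γ^(i−1) < x ≤ γ^i), the estimate x̃ = 2γ^i/(γ+1) satisfies |x̃ − x| ≤ ((ρ−1)/(ρ+1))·x. Hence every quantile of D is estimated by the final UDDSketch summary with relative error at most ((x_max/x_min)^(2/(m−1)) − 1)/((x_max/x_min)^(2/(m−1)) + 1). -/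
/-!
Let `γ` be the base just before the last collapse, so that `γ ^ 2` is the final base. Bucket indices
are monotone in the data, so data in `[a, b]` occupy fewer than `log_γ (b / a) + 2` buckets. If more
than `m` buckets are occupied, then `γ ^ (m - 1) < b / a`, that is,
`γ ^ 2 < (b / a) ^ (2 / (m - 1))`, and the error bound `(γ - 1) / (γ + 1)` is increasing in `γ`.
-/

/-- The index `i_γ(x)` of the bucket `(γ ^ (i - 1), γ ^ i]` containing `x`; meaningful for `1 < γ`
and `0 < x`. -/
noncomputable def bucketIndex (γ x : ℝ) : ℤ :=
  ⌈Real.logb γ x⌉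

/-- The value `x̃` with which a sketch of base `γ` represents all elements of its bucket `i`. -/
noncomputable def bucketEstimate (γ : ℝ) (i : ℤ) : ℝ :=
  2 * γ ^ i / (γ + 1)

/-- The relative error `α` guaranteed by a sketch of base `γ`. -/
noncomputable def relativeAccuracy (γ : ℝ) : ℝ :=
  (γ - 1) / (γ + 1)

lemma monotoneOn_relativeAccuracy : MonotoneOn relativeAccuracy (Set.Ioi (-1)) := by
  intro γ hγ ρ hρ hγρ
  rw [Set.mem_Ioi] at hγ hρ
  unfold relativeAccuracy
  rw [div_le_div_iff₀ (by linarith) (by linarith)]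
  linarith

lemma abs_bucketEstimate_sub_le {γ x : ℝ} {i : ℤ} (hγ : 0 < γ) (hlo : γ ^ (i - 1) ≤ x)
    (hhi : x ≤ γ ^ i) : |bucketEstimate γ i - x| ≤ relativeAccuracy γ * x := by
  have hhi' : γ ^ i ≤ γ * x := by
    rwa [zpow_sub_one₀ hγ.ne', ← div_eq_mul_inv, div_le_iff₀' hγ] at hlo
  have hupper : bucketEstimate γ i ≤ (1 + relativeAccuracy γ) * x :=
    calc 2 * γ ^ i / (γ + 1) ≤ 2 * (γ * x) / (γ + 1) := by gcongr
      _ = (1 + relativeAccuracy γ) * x := by unfold relativeAccuracy; field_simp; ring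
  have hlower : (1 - relativeAccuracy γ) * x ≤ bucketEstimate γ i :=
    calc (1 - relativeAccuracy γ) * x = 2 * x / (γ + 1) := by
          unfold relativeAccuracy; field_simp; ring
      _ ≤ 2 * γ ^ i / (γ + 1) := by gcongr
  rw [abs_le]
  constructor <;> linarith

lemma monotoneOn_bucketIndex {γ : ℝ} (hγ : 1 < γ) : MonotoneOn (bucketIndex γ) (Set.Ioi 0) :=
  fun _ hx _ _ hxy ↦ Int.ceil_le_ceil (Real.logb_le_logb_of_le hγ hx hxy)

section Occupancy

variable {γ a b : ℝ} {S : Set ℝ}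

lemma ncard_image_bucketIndex_le (hγ : 1 < γ) (ha : 0 < a) (hS : S ⊆ Set.Icc a b) :
    (bucketIndex γ '' S).ncard ≤ (bucketIndex γ b + 1 - bucketIndex γ a).toNat := by
  have hpos : Set.Icc a b ⊆ Set.Ioi 0 := fun _ hx ↦ ha.trans_le hx.1
  have himage : bucketIndex γ '' S ⊆ Set.Icc (bucketIndex γ a) (bucketIndex γ b) :=
    (((monotoneOn_bucketIndex hγ).mono hpos).mapsTo_Icc.mono_left hS).image_subset
  calc (bucketIndex γ '' S).ncard
      ≤ (Set.Icc (bucketIndex γ a) (bucketIndex γ b)).ncard :=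
        Set.ncard_le_ncard himage (Set.finite_Icc _ _)
    _ = (bucketIndex γ b + 1 - bucketIndex γ a).toNat := by
        rw [← Finset.coe_Icc, Set.ncard_coe_finset, Int.card_Icc]

lemma bucketIndex_sub_bucketIndex_lt (ha : a ≠ 0) (hb : b ≠ 0) :
    (bucketIndex γ b - bucketIndex γ a : ℝ) < Real.logb γ (b / a) + 1 := by
  rw [Real.logb_div hb ha]
  have hceil_b : (bucketIndex γ b : ℝ) < Real.logb γ b + 1 := Int.ceil_lt_add_one _
  have hceil_a : Real.logb γ a ≤ bucketIndex γ a := Int.le_ceil _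
  linarith

lemma rpow_sub_one_lt_div_of_lt_ncard {m : ℕ} (hγ : 1 < γ) (ha : 0 < a) (hS : S ⊆ Set.Icc a b)
    (hcard : m < (bucketIndex γ '' S).ncard) : γ ^ ((m : ℝ) - 1) < b / a := by
  obtain ⟨x, hx⟩ : S.Nonempty := (Set.nonempty_of_ncard_ne_zero (Nat.ne_zero_of_lt hcard)).of_image
  have hb : 0 < b := ha.trans_le ((hS hx).1.trans (hS hx).2)
  have hspread : (m : ℤ) ≤ bucketIndex γ b - bucketIndex γ a := by
    have hcount := hcard.trans_le (ncard_image_bucketIndex_le hγ ha hS)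
    omega
  have hspread' : (m : ℝ) ≤ bucketIndex γ b - bucketIndex γ a := mod_cast hspread
  rw [← Real.lt_logb_iff_rpow_lt hγ (div_pos hb ha)]
  linarith [bucketIndex_sub_bucketIndex_lt (γ := γ) ha.ne' hb.ne']

end Occupancy

lemma pow_lt_rpow_div_of_rpow_lt {x y p : ℝ} {n : ℕ} (hx : 0 ≤ x) (hp : 0 < p) (hn : n ≠ 0)
    (h : x ^ p < y) : x ^ n < y ^ ((n : ℝ) / p) :=
  calc x ^ n = (x ^ p) ^ ((n : ℝ) / p) := by
        rw [← Real.rpow_mul hx, mul_div_cancel₀ _ hp.ne', Real.rpow_natCast]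
    _ < y ^ ((n : ℝ) / p) := Real.rpow_lt_rpow (by positivity) h (by positivity)

theorem final_sketch_accuracy_general {γ a b : ℝ} {m : ℕ} {S : Set ℝ} (hγ : 1 < γ) (hm : 2 ≤ m)
    (ha : 0 < a) (hS : S ⊆ Set.Icc a b) (hcard : m < (bucketIndex γ '' S).ncard)
    {x : ℝ} {i : ℤ} (hlo : (γ ^ 2) ^ (i - 1) < x) (hhi : x ≤ (γ ^ 2) ^ i) :
    |bucketEstimate (γ ^ 2) i - x| ≤
      relativeAccuracy ((b / a) ^ ((2 : ℝ) / ((m : ℝ) - 1))) * x := by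
  have hγ0 : 0 < γ ^ 2 := by positivity
  have hx : 0 < x := (zpow_pos hγ0 _).trans hlo
  have hm1 : (0 : ℝ) < (m : ℝ) - 1 := sub_pos.2 (mod_cast hm)
  have hbase : γ ^ 2 < (b / a) ^ ((2 : ℝ) / ((m : ℝ) - 1)) :=
    mod_cast pow_lt_rpow_div_of_rpow_lt (by positivity) hm1 two_ne_zero
      (rpow_sub_one_lt_div_of_lt_ncard hγ ha hS hcard)
  calc |bucketEstimate (γ ^ 2) i - x|
      ≤ relativeAccuracy (γ ^ 2) * x := abs_bucketEstimate_sub_le hγ0 hlo.le hhi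
    _ ≤ relativeAccuracy ((b / a) ^ ((2 : ℝ) / ((m : ℝ) - 1))) * x := by
        gcongr
        exact monotoneOn_relativeAccuracy (neg_one_lt_zero.trans hγ0)
          (neg_one_lt_zero.trans (hγ0.trans hbase)) hbase.le

/-- Distribution-independent accuracy of the final sketch:
if at base γ₀^(2^(t−1)) the data in [x_min, x_max] still occupy more than m
buckets, then with final base γ = γ₀^(2^t) and ρ = (x_max/x_min)^(2/(m−1)),
every item x in bucket i of the final sketch is estimated by 2γ^i/(γ+1)
with relative error at most (ρ−1)/(ρ+1). -/
theorem final_sketch_accuracy (γ₀ : ℝ) (hγ : 1 < γ₀) (m : ℕ) (hm : 2 ≤ m)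
    (xmin xmax : ℝ) (hmin : 0 < xmin) (hle : xmin ≤ xmax)
    (D : Multiset ℝ) (hmem : ∀ x ∈ D, xmin ≤ x ∧ x ≤ xmax)
    (t : ℕ) (ht : 1 ≤ t)
    (hcard : m < {k : ℤ | ∃ x ∈ D, ⌈Real.logb (γ₀ ^ 2 ^ (t - 1)) x⌉ = k}.ncard) :
    ∀ x ∈ D, ∀ i : ℤ,
      (γ₀ ^ 2 ^ t) ^ (i - 1) < x → x ≤ (γ₀ ^ 2 ^ t) ^ i →
      |2 * (γ₀ ^ 2 ^ t) ^ i / (γ₀ ^ 2 ^ t + 1) - x| ≤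
        (((xmax / xmin) ^ ((2 : ℝ) / ((m : ℝ) - 1)) - 1) /
          ((xmax / xmin) ^ ((2 : ℝ) / ((m : ℝ) - 1)) + 1)) * x := by
  have hcollapse : γ₀ ^ 2 ^ t = (γ₀ ^ 2 ^ (t - 1)) ^ 2 := by
    rw [← pow_mul, ← pow_succ, Nat.sub_add_cancel ht]
  rw [hcollapse]
  exact fun _ _ _ ↦
    final_sketch_accuracy_general (one_lt_pow₀ hγ (by positivity)) hm hmin hmem hcard
end
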